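/- (Definability of the existential bisimulation quantifier gives right uniform interpolants.) Let p be a propositional variable, q̄ a finite set of variables not containing p, φ a formula with variables among {p} ∪ q̄, and ε a formula with variables among q̄. If ⟦ε⟧_{p,q̄} = E_p(⟦φ⟧_{p,q̄}), then φ ⊨ ε, and for every formula θ not containing p, φ ⊨ θ implies ε ⊨ θ; i.e., ε is a right uniform interpolant of φ with respect to p. -/

import Mathlib

/-!
If `M, w ⊩ ε`, definability of `Ep` yields a finite `M', w' ⊩ φ` related to `M, w` by some
q̄-bisimulation `Z`. A formula `θ` entailed by `φ` may mention variables outside q̄, on which `M`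
and `M'` need not agree, so `θ` cannot be moved from `M'` back to `M` directly. Instead the two
models are amalgamated: on the set of `Z`-related pairs, ordered componentwise, variables in
`{p} ∪ q̄` are read off from `M'` and all others from `M`. The back-and-forth conditions on `Z` make
one projection a `({p} ∪ q̄)`-bisimulation onto `M'`, and the other a bisimulation onto `M` for all
variables but `p`. Bisimulation invariance of forcing (`forces_iff_of_isBisim`) then transfers `φ`
from `M'` to the amalgam, and `θ` from the amalgam to `M`.
-/

/-- Intuitionistic propositional formulas over variables indexed by `ℕ`. -/
inductive IPForm : Type
  | var : ℕ → IPForm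
  | bot : IPForm
  | conj : IPForm → IPForm → IPForm
  | disj : IPForm → IPForm → IPForm
  | impl : IPForm → IPForm → IPForm

/-- The set of propositional variables occurring in a formula. -/
def IPForm.vars : IPForm → Finset ℕ
  | .var p => {p}
  | .bot => ∅
  | .conj a b => a.vars ∪ b.vars
  | .disj a b => a.vars ∪ b.vars
  | .impl a b => a.vars ∪ b.vars

/-- The implication-nesting depth of a formula. -/
def IPForm.depth : IPForm → ℕ
  | .var _ => 0
  | .bot => 0
  | .conj a b => max a.depth b.depth
  | .disj a b => max a.depth b.depth
  | .impl a b => max a.depth b.depth + 1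

/-- An intuitionistic Kripke model: a preorder together with a persistent
valuation of the propositional variables. -/
structure KModel where
  W : Type
  rel : W → W → Prop
  refl : ∀ w, rel w w
  trans : ∀ {u v w}, rel u v → rel v w → rel u w
  val : ℕ → W → Prop
  mono : ∀ {p u v}, rel u v → val p u → val p v

/-- The intuitionistic forcing relation. -/
def KModel.Forces (M : KModel) : M.W → IPForm → Prop
  | w, .var p => M.val p w
  | _, .bot => False
  | w, .conj a b => M.Forces w a ∧ M.Forces w b
  | w, .disj a b => M.Forces w a ∨ M.Forces w b
  | w, .impl a b => ∀ v, M.rel w v → M.Forces v a → M.Forces v b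

/-- Semantic entailment over finite Kripke models. -/
def Entails (φ ψ : IPForm) : Prop :=
  ∀ (M : KModel), Finite M.W → ∀ w : M.W, M.Forces w φ → M.Forces w ψ

/-- A q̄-bisimulation between two Kripke models. -/
def IsBisim (q : Set ℕ) (M M' : KModel) (Z : M.W → M'.W → Prop) : Prop :=
  ∀ w w', Z w w' →
    (∀ p ∈ q, (M.val p w ↔ M'.val p w')) ∧
    (∀ v, M.rel w v → ∃ v', M'.rel w' v' ∧ Z v v') ∧
    (∀ v', M'.rel w' v' → ∃ v, M.rel w v ∧ Z v v')

/-- Two pointed models are q̄-bisimilar if some q̄-bisimulation relates them. -/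
def Bisimilar (q : Set ℕ) (M : KModel) (w : M.W) (M' : KModel) (w' : M'.W) : Prop :=
  ∃ Z, IsBisim q M M' Z ∧ Z w w'

/-- A finite pointed Kripke model. -/
structure PKModel where
  M : KModel
  fin : Finite M.W
  w : M.W

/-- The class of finite pointed models forcing a formula φ. -/
def semC (φ : IPForm) : Set PKModel := {X | X.M.Forces X.w φ}

/-- The existential bisimulation quantifier: the class of finite pointed models
q̄-bisimilar to some member of K. -/
def Ep (q : Finset ℕ) (K : Set PKModel) : Set PKModel :=
  {X | ∃ Y ∈ K, Bisimilar ↑q X.M X.w Y.M Y.w}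

/-- The universal bisimulation quantifier: the class of finite pointed models
all of whose q̄-bisimilar companions are in K. -/
def Ap (q : Finset ℕ) (K : Set PKModel) : Set PKModel :=
  {X | ∀ Y : PKModel, Bisimilar ↑q X.M X.w Y.M Y.w → Y ∈ K}

/-- Forcing of formulas over `q` is invariant under `q`-bisimulation. -/
theorem forces_iff_of_isBisim {q : Set ℕ} {M M' : KModel} {Z : M.W → M'.W → Prop}
    (hZ : IsBisim q M M' Z) (ψ : IPForm) (hψ : ∀ r ∈ ψ.vars, r ∈ q) :
    ∀ w w', Z w w' → (M.Forces w ψ ↔ M'.Forces w' ψ) := by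
  induction ψ with
  | var r =>
    intro w w' h
    exact (hZ w w' h).1 r (hψ r (by simp [IPForm.vars]))
  | bot => intro w w' _; exact Iff.rfl
  | conj a b iha ihb =>
    simp only [IPForm.vars, Finset.mem_union] at hψ
    intro w w' h
    exact and_congr (iha (fun r hr => hψ r (.inl hr)) w w' h)
      (ihb (fun r hr => hψ r (.inr hr)) w w' h)
  | disj a b iha ihb =>
    simp only [IPForm.vars, Finset.mem_union] at hψ
    intro w w' h
    exact or_congr (iha (fun r hr => hψ r (.inl hr)) w w' h)
      (ihb (fun r hr => hψ r (.inr hr)) w w' h)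
  | impl a b iha ihb =>
    simp only [IPForm.vars, Finset.mem_union] at hψ
    replace iha := iha (fun r hr => hψ r (.inl hr))
    replace ihb := ihb (fun r hr => hψ r (.inr hr))
    intro w w' h
    obtain ⟨-, forth, back⟩ := hZ w w' h
    constructor
    · intro hf v' hv' ha
      obtain ⟨v, hv, hz⟩ := back v' hv'
      exact (ihb v v' hz).1 (hf v hv ((iha v v' hz).2 ha))
    · intro hf v hv ha
      obtain ⟨v', hv', hz⟩ := forth v hv
      exact (ihb v v' hz).2 (hf v' hv' ((iha v v' hz).1 ha))

/-- The amalgam of `M` and `M'` along a relation `Z`: the worlds are the `Z`-related pairs, ordered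
componentwise; variables in `s` take their value from `M'`, all others from `M`. -/
def amalgam (s : Set ℕ) (M M' : KModel) (Z : M.W → M'.W → Prop) : KModel where
  W := {x : M.W × M'.W // Z x.1 x.2}
  rel x y := M.rel x.1.1 y.1.1 ∧ M'.rel x.1.2 y.1.2
  refl _ := ⟨M.refl _, M'.refl _⟩
  trans h k := ⟨M.trans h.1 k.1, M'.trans h.2 k.2⟩
  val r x := (r ∈ s ∧ M'.val r x.1.2) ∨ (r ∉ s ∧ M.val r x.1.1)
  mono h := Or.imp (And.imp_right (M'.mono h.2)) (And.imp_right (M.mono h.1))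

/-- Projection to the second factor is a bisimulation for the variables in `s`. -/
theorem amalgam_isBisim_snd {q s : Set ℕ} {M M' : KModel} {Z : M.W → M'.W → Prop}
    (hZ : IsBisim q M M' Z) :
    IsBisim s (amalgam s M M' Z) M' (fun x v => x.1.2 = v) := by
  rintro ⟨⟨u, v⟩, huv⟩ _ rfl
  refine ⟨fun r hr => by simp [amalgam, hr], fun y hy => ⟨y.1.2, hy.2, rfl⟩, fun v₂ hv => ?_⟩
  obtain ⟨u₂, hu, hz⟩ := (hZ u v huv).2.2 v₂ hv
  exact ⟨⟨(u₂, v₂), hz⟩, ⟨hu, hv⟩, rfl⟩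

/-- Projection to the first factor is a bisimulation for all variables on which the amalgam does
not follow `M'`, and for those on which `Z` guarantees that `M` and `M'` agree. -/
theorem amalgam_isBisim_fst {q s : Set ℕ} {M M' : KModel} {Z : M.W → M'.W → Prop}
    (hZ : IsBisim q M M' Z) :
    IsBisim (q ∪ sᶜ) (amalgam s M M' Z) M (fun x u => x.1.1 = u) := by
  rintro ⟨⟨u, v⟩, huv⟩ _ rfl
  refine ⟨fun r hr => ?_, fun y hy => ⟨y.1.1, hy.1, rfl⟩, fun u₂ hu => ?_⟩
  · by_cases hs : r ∈ s
    · have hq : r ∈ q := hr.resolve_right fun h => h hs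
      simpa [amalgam, hs] using ((hZ u v huv).1 r hq).symm
    · simp [amalgam, hs]
  · obtain ⟨v₂, hv, hz⟩ := (hZ u v huv).2.1 u₂ hu
    exact ⟨⟨(u₂, v₂), hz⟩, ⟨hu, hv⟩, rfl⟩

/-- **Definability of the existential bisimulation quantifier gives right
uniform interpolants.** -/
theorem definable_Ep_gives_rightUI (p : ℕ) (qbar : Finset ℕ) (hp : p ∉ qbar)
    (φ ε : IPForm) (hφ : φ.vars ⊆ insert p qbar) (hε : ε.vars ⊆ qbar)
    (h : semC ε = Ep qbar (semC φ)) :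
    Entails φ ε ∧ ∀ θ : IPForm, p ∉ θ.vars → Entails φ θ → Entails ε θ := by
  constructor
  · intro M hM w hw
    have hmem : (⟨M, hM, w⟩ : PKModel) ∈ Ep qbar (semC φ) := by
      refine ⟨⟨M, hM, w⟩, hw, Eq, ?_, rfl⟩
      rintro u _ rfl
      exact ⟨fun _ _ => Iff.rfl, fun v hv => ⟨v, hv, rfl⟩, fun v hv => ⟨v, hv, rfl⟩⟩
    rw [← h] at hmem
    exact hmem
  · intro θ hθ hent M hM w hw
    have hmem : (⟨M, hM, w⟩ : PKModel) ∈ semC ε := hw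
    rw [h] at hmem
    obtain ⟨⟨M', hM', w'⟩, hw', Z, hZ, hww'⟩ := hmem
    let s : Set ℕ := ↑(insert p qbar)
    let N := amalgam s M M' Z
    have hN : Finite N.W := inferInstanceAs (Finite {x : M.W × M'.W // Z x.1 x.2})
    let x : N.W := ⟨(w, w'), hww'⟩
    have hxφ : N.Forces x φ :=
      (forces_iff_of_isBisim (amalgam_isBisim_snd (s := s) hZ) φ
        (fun r hr => Finset.mem_coe.2 (hφ hr)) x w' rfl).2 hw'
    refine (forces_iff_of_isBisim (amalgam_isBisim_fst (s := s) hZ) θ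
      (fun r hr => ?_) x w rfl).1 (hent N hN x hxφ)
    have hrp : r ≠ p := fun e => hθ (e ▸ hr)
    by_cases hq : r ∈ qbar
    · exact Or.inl hq
    · exact Or.inr (by simp [s, hrp, hq])
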